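/- Assume m < 0 and let k ≥ 1 be an integer. Then p_z(X) ≠ 0 for every z ∈ ℍ, and for every z ∈ ℍ with Q_X(z) ≠ 0 one has 0 < w(z) < 1, where w(z) := 2|m|/p_z(X)². Moreover, defining F(z) := w(z)^{k/2} · ₂F₁( k/2, (k+1)/2; k + 1/2; w(z) ) on the open set {z ∈ ℍ : Q_X(z) ≠ 0}, the k-fold iterated raising operator satisfies (R_0^k F)(z) = (Γ(2k)/Γ(k)) · ( √(4N|m|) · sgn(p_z(X)) / Q_X(z) )^k for all z in this set. -/

import Mathlib

open Complex ComplexConjugate Metric Set MeasureTheory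

noncomputable section

/-- The upper half-plane, as a subset of `ℂ`. -/
def UH : Set ℂ := {z | 0 < z.im}

/-- The Wirtinger derivative `∂f/∂z = (1/2)(∂f/∂x − i·∂f/∂y)`. -/
def dz (f : ℂ → ℂ) (z : ℂ) : ℂ :=
  (1 / 2 : ℂ) * (fderiv ℝ f z 1 - Complex.I * fderiv ℝ f z Complex.I)

/-- The Maass raising operator `R_κ f = 2i·∂f/∂z + (κ/y)·f`. -/
def raise (κ : ℝ) (f : ℂ → ℂ) : ℂ → ℂ :=
  fun z => 2 * Complex.I * dz f z + ((κ / z.im : ℝ) : ℂ) * f z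

/-- The iterated raising operator `R_κⁿ = R_{κ+2n−2} ∘ ⋯ ∘ R_{κ+2} ∘ R_κ`. -/
def raiseIter (κ : ℝ) : ℕ → (ℂ → ℂ) → (ℂ → ℂ)
  | 0 => fun f => f
  | n + 1 => fun f => raise (κ + 2 * n) (raiseIter κ n f)

/-- `m = (b² − 4Nac)/(4N)`, the value `q(X)` of the quadratic form at
`X = ((b/2N, c/N), (−a, −b/2N))`. -/
def mVal (N : ℕ) (a b c : ℝ) : ℝ := (b ^ 2 - 4 * N * a * c) / (4 * N)

/-- The quadratic polynomial `Q_X(z) = aNz² + bz + c`. -/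
def Qx (N : ℕ) (a b c : ℝ) (z : ℂ) : ℂ := (a : ℂ) * (N : ℂ) * z ^ 2 + (b : ℂ) * z + (c : ℂ)

/-- The quantity `p_z(X) = (aN|z|² + bx + c)/(√(2N)·y)`. -/
def pX (N : ℕ) (a b c : ℝ) (z : ℂ) : ℝ :=
  (a * N * Complex.normSq z + b * z.re + c) / (Real.sqrt (2 * N) * z.im)

/-- The argument `w(z) = 2|m|/p_z(X)²` of the hypergeometric series. -/
def wF (N : ℕ) (a b c : ℝ) (z : ℂ) : ℝ := 2 * |mVal N a b c| / (pX N a b c z) ^ 2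

/-- The Gauss hypergeometric series `₂F₁(α, β; γ; w) = ∑ (α)ₙ(β)ₙ/((γ)ₙ n!) wⁿ`,
with `(α)ₙ` the ascending Pochhammer symbol. -/
def gaussF (α β γ w : ℝ) : ℝ :=
  ∑' n : ℕ, (Polynomial.eval α (ascPochhammer ℝ n) * Polynomial.eval β (ascPochhammer ℝ n) /
    (Polynomial.eval γ (ascPochhammer ℝ n) * (n.factorial : ℝ))) * w ^ n

/-!
The identity `|Q_X(z)|² = 2N y² (p_z(X)² + 2m)` forces `p_z(X)² > 2|m|` when `m < 0` and
`Q_X(z) ≠ 0`. So `t := sgn(p) p_z(X) / √(2|m|)`, with the sign `sgn(p)` held fixed, exceeds `1`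
near such a `z`; there `w = t⁻²` and `F = Φ_k(t)`, where
`Φ_a(t) = t^{-a} ₂F₁(a/2, (a+1)/2; k+1/2; t⁻²)`. Since `R_2 R_0 t = 0`, the chain rule gives
`R_0^j (G ∘ t) = (R_0 t)^j · G^{(j)} ∘ t` for every smooth `G`. A contiguous relation gives
`Φ_a' = -a Φ_{a+1}`, hence `Φ_k^{(k)} = (-1)^k (k)_k Φ_{2k}`, and `Φ_{2k}(t) = (t² - 1)^{-k}` by the
binomial series. Finally `-R_0 t / (t² - 1) = √(4N|m|) sgn(p) / Q_X(z)`, because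
`R_0 p_z(X) = -conj Q_X(z) / (√(2N) y²)`.
-/

lemma gaussF_eq_ordinaryHypergeometric (α β γ w : ℝ) : gaussF α β γ w = ₂F₁ α β γ w := by
  rw [ordinaryHypergeometric_eq_tsum, gaussF]
  refine tsum_congr fun n => ?_
  rw [smul_eq_mul, div_eq_mul_inv, mul_inv]
  ring

lemma hasSum_nsmul_of_hasFPowerSeriesOnBall {𝕜 E F : Type*} [NontriviallyNormedField 𝕜]
    [NormedAddCommGroup E] [NormedSpace 𝕜 E] [NormedAddCommGroup F] [NormedSpace 𝕜 F]
    [CompleteSpace F] {f : E → F} {p : FormalMultilinearSeries 𝕜 E F} {r : ENNReal}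
    (hf : HasFPowerSeriesOnBall f p 0 r) {x : E} (hx : x ∈ eball 0 r) :
    HasSum (fun n : ℕ => n • p n fun _ => x) (fderiv 𝕜 f x x) := by
  have hsum := (hf.fderiv.hasSum hx).mapL (ContinuousLinearMap.apply 𝕜 F x)
  simp only [zero_add, ContinuousLinearMap.apply_apply,
    FormalMultilinearSeries.derivSeries_apply_diag] at hsum
  rw [← hasSum_nat_add_iff' 1]
  simpa using hsum

section Hypergeometric

variable {𝕂 : Type*} [RCLike 𝕂]

lemma one_le_radius_ordinaryHypergeometricSeries (α β γ : 𝕂) :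
    1 ≤ (ordinaryHypergeometricSeries 𝕂 α β γ).radius := by
  by_cases h : ∀ n : ℕ, (n : 𝕂) ≠ -α ∧ (n : 𝕂) ≠ -β ∧ (n : 𝕂) ≠ -γ
  · exact (ordinaryHypergeometricSeries_radius_eq_one 𝕂 α β γ h).ge
  · obtain ⟨n, hn⟩ : ∃ n : ℕ, α = -n ∨ β = -n ∨ γ = -n := by grind
    rcases hn with rfl | rfl | rfl
    · simp [ordinaryHypergeometric_radius_top_of_neg_nat₁]
    · simp [ordinaryHypergeometric_radius_top_of_neg_nat₂]
    · simp [ordinaryHypergeometric_radius_top_of_neg_nat₃]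

lemma hasFPowerSeriesOnBall_ordinaryHypergeometric (α β γ : 𝕂) :
    HasFPowerSeriesOnBall (₂F₁ α β γ : 𝕂 → 𝕂) (ordinaryHypergeometricSeries 𝕂 α β γ) 0 1 :=
  have hr := one_le_radius_ordinaryHypergeometricSeries α β γ
  ((ordinaryHypergeometricSeries 𝕂 α β γ).hasFPowerSeriesOnBall
    (zero_lt_one.trans_le hr)).mono one_pos hr

lemma ascPochhammer_eval_mul_add (α : 𝕂) (n : ℕ) :
    (ascPochhammer 𝕂 n).eval α * (α + n) = α * (ascPochhammer 𝕂 n).eval (α + 1) := by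
  rw [← ascPochhammer_succ_eval, ascPochhammer_succ_left]
  simp

lemma mem_eball_zero_one_of_norm_lt_one {E : Type*} [SeminormedAddGroup E] {x : E}
    (hx : ‖x‖ < 1) : x ∈ eball (0 : E) 1 := by
  rwa [← ENNReal.ofReal_one, eball_ofReal, mem_ball_zero_iff]

lemma differentiableAt_ordinaryHypergeometric (α β γ : 𝕂) {x : 𝕂} (hx : ‖x‖ < 1) :
    DifferentiableAt 𝕂 (₂F₁ α β γ : 𝕂 → 𝕂) x :=
  ((hasFPowerSeriesOnBall_ordinaryHypergeometric α β γ).analyticAt_of_mem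
    (mem_eball_zero_one_of_norm_lt_one hx)).differentiableAt

lemma mul_deriv_ordinaryHypergeometric (α β γ : 𝕂) {x : 𝕂} (hx : ‖x‖ < 1) :
    x * deriv (₂F₁ α β γ) x = α * (₂F₁ (α + 1) β γ x - ₂F₁ α β γ x) := by
  have hx1 := mem_eball_zero_one_of_norm_lt_one hx
  have hF := hasFPowerSeriesOnBall_ordinaryHypergeometric α β γ
  have hF' := hasFPowerSeriesOnBall_ordinaryHypergeometric (α + 1) β γ
  have hEuler := hasSum_nsmul_of_hasFPowerSeriesOnBall hF hx1
  have hdiff := ((hF'.hasSum hx1).sub (hF.hasSum hx1)).mul_left α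
  rw [fderiv_eq_smul_deriv, smul_eq_mul] at hEuler
  rw [zero_add] at hdiff
  refine hEuler.unique (hdiff.congr_fun fun n => ?_)
  simp only [ordinaryHypergeometricSeries_apply_eq, nsmul_eq_mul, smul_eq_mul]
  linear_combination ((n.factorial : 𝕂)⁻¹ * (ascPochhammer 𝕂 n).eval β *
    ((ascPochhammer 𝕂 n).eval γ)⁻¹ * x ^ n) * ascPochhammer_eval_mul_add α n

lemma ordinaryHypergeometric_comm (α β γ x : 𝕂) : ₂F₁ α β γ x = ₂F₁ β α γ x := by
  rw [ordinaryHypergeometric, ordinaryHypergeometricSeries_symm, ordinaryHypergeometric]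

end Hypergeometric

lemma ordinaryHypergeometric_cancel_right (α : ℝ) {β x : ℝ} (hβ : ∀ n : ℕ, (n : ℝ) ≠ -β)
    (hx : |x| < 1) : ₂F₁ α β β x = (1 - x) ^ (-α) := by
  have hneg : -x ∈ eball (0 : ℝ) 1 := mem_eball_zero_one_of_norm_lt_one (by simpa using hx)
  have hsum := (Real.one_add_rpow_hasFPowerSeriesOnBall_zero (a := -α)).sum hneg
  rw [binomialSeries_eq_ordinaryHypergeometricSeries hβ, zero_add, neg_neg] at hsum
  rw [sub_eq_add_neg, hsum]
  refine tsum_congr fun n => ?_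
  rw [FormalMultilinearSeries.compContinuousLinearMap_apply]
  congr 1
  ext i
  simp

lemma ascPochhammer_eval_eq_Gamma_div {x : ℝ} (hx : 0 < x) (n : ℕ) :
    (ascPochhammer ℝ n).eval x = Real.Gamma (x + n) / Real.Gamma x := by
  induction n with
  | zero => simp [(Real.Gamma_pos_of_pos hx).ne']
  | succ n ih =>
    have hxn : x + n ≠ 0 := by positivity
    rw [ascPochhammer_succ_eval, ih, Nat.cast_succ, ← add_assoc, Real.Gamma_add_one hxn]
    ring

/-- `t^{-a} ₂F₁(a/2, (a+1)/2; γ; t⁻²)`, the hypergeometric factor of the Legendre function of the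
second kind `Q_ν^μ(t)` with `a = ν + μ + 1` and `γ = ν + 3/2`. -/
def legendreSeries (γ a t : ℝ) : ℝ := t ^ (-a) * ₂F₁ (a / 2) ((a + 1) / 2) γ (t ^ 2)⁻¹

lemma abs_inv_sq_lt_one {t : ℝ} (ht : 1 < t) : |(t ^ 2)⁻¹| < 1 := by
  rw [abs_of_pos (by positivity)]
  exact inv_lt_one_of_one_lt₀ (one_lt_pow₀ ht two_ne_zero)

lemma hasDerivAt_legendreSeries (γ a : ℝ) {t : ℝ} (ht : 1 < t) :
    HasDerivAt (legendreSeries γ a) (-a * legendreSeries γ (a + 1) t) t := by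
  have ht0 : t ≠ 0 := (one_pos.trans ht).ne'
  have hx := abs_inv_sq_lt_one ht
  have hinv : HasDerivAt (fun t : ℝ => (t ^ 2)⁻¹) (-2 / t * (t ^ 2)⁻¹) t := by
    refine ((hasDerivAt_pow 2 t).inv (pow_ne_zero 2 ht0)).congr_deriv ?_
    push_cast
    field_simp
  have hF := (differentiableAt_ordinaryHypergeometric (a / 2) ((a + 1) / 2) γ hx).hasDerivAt
  have hcontig := mul_deriv_ordinaryHypergeometric (a / 2) ((a + 1) / 2) γ hx
  have hshift : ₂F₁ ((a + 1) / 2) ((a + 1 + 1) / 2) γ (t ^ 2)⁻¹ =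
      ₂F₁ (a / 2 + 1) ((a + 1) / 2) γ (t ^ 2)⁻¹ := by
    rw [ordinaryHypergeometric_comm, show (a + 1 + 1) / 2 = a / 2 + 1 by ring]
  have hcomp : HasDerivAt (fun t => ₂F₁ (a / 2) ((a + 1) / 2) γ (t ^ 2)⁻¹) _ t := hF.comp t hinv
  refine ((Real.hasDerivAt_rpow_const (p := -a) (.inl ht0)).mul hcomp).congr_deriv ?_
  rw [legendreSeries, hshift, neg_add', Real.rpow_sub_one ht0]
  linear_combination (-2 * t ^ (-a) / t) * hcontig

lemma legendreSeries_two_mul {a t : ℝ} (ha : ∀ n : ℕ, (n : ℝ) ≠ -(a + 1 / 2)) (ht : 1 < t) :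
    legendreSeries (a + 1 / 2) (2 * a) t = (t ^ 2 - 1) ^ (-a) := by
  have ht0 : 0 < t := one_pos.trans ht
  have hx := abs_inv_sq_lt_one ht
  have hsub : 0 ≤ 1 - (t ^ 2)⁻¹ := sub_nonneg.2 (le_of_abs_le hx.le)
  rw [legendreSeries, mul_div_cancel_left₀ a two_ne_zero,
    show (2 * a + 1) / 2 = a + 1 / 2 by ring, ordinaryHypergeometric_cancel_right a ha hx,
    ← mul_neg, Real.rpow_mul ht0.le, Real.rpow_two, ← Real.mul_rpow (by positivity) hsub,
    mul_one_sub, mul_inv_cancel₀ (by positivity)]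

lemma rpow_mul_gaussF_inv_sq (γ a : ℝ) {t : ℝ} (ht : 0 ≤ t) :
    (t ^ 2)⁻¹ ^ (a / 2) * gaussF (a / 2) ((a + 1) / 2) γ (t ^ 2)⁻¹ = legendreSeries γ a t := by
  have hpow : (t ^ 2)⁻¹ ^ (a / 2) = t ^ (-a) := by
    rw [Real.inv_rpow (by positivity), ← Real.rpow_two, ← Real.rpow_mul ht,
      mul_div_cancel₀ a two_ne_zero, Real.rpow_neg ht]
  rw [hpow, gaussF_eq_ordinaryHypergeometric, legendreSeries]

/-- The closed form of the `j`-th derivative of `legendreSeries γ a` on `t > 1`. -/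
def legendreSeriesDeriv (γ a : ℝ) (j : ℕ) (t : ℝ) : ℝ :=
  (-1) ^ j * (ascPochhammer ℝ j).eval a * legendreSeries γ (a + j) t

lemma legendreSeriesDeriv_zero (γ a t : ℝ) :
    legendreSeriesDeriv γ a 0 t = legendreSeries γ a t := by
  simp [legendreSeriesDeriv]

lemma hasDerivAt_legendreSeriesDeriv (γ a : ℝ) (j : ℕ) {t : ℝ} (ht : 1 < t) :
    HasDerivAt (legendreSeriesDeriv γ a j) (legendreSeriesDeriv γ a (j + 1) t) t := by
  refine ((hasDerivAt_legendreSeries γ (a + j) ht).const_mul _).congr_deriv ?_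
  rw [legendreSeriesDeriv, ascPochhammer_succ_eval, Nat.cast_succ, ← add_assoc]
  ring

lemma legendreSeriesDeriv_self {k : ℕ} (hk : 1 ≤ k) {t : ℝ} (ht : 1 < t) :
    legendreSeriesDeriv (k + 1 / 2) k k t =
      Real.Gamma (2 * k) / Real.Gamma k * (-1 / (t ^ 2 - 1)) ^ k := by
  have hk0 : (0 : ℝ) < k := by exact_mod_cast hk
  have hnonpole (n : ℕ) : (n : ℝ) ≠ -(k + 1 / 2) := by
    have : (0 : ℝ) ≤ n := n.cast_nonneg
    linarith
  have ht2 : 0 ≤ t ^ 2 - 1 := sub_nonneg.2 (one_le_pow₀ ht.le)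
  rw [legendreSeriesDeriv, ascPochhammer_eval_eq_Gamma_div hk0, ← two_mul,
    legendreSeries_two_mul hnonpole ht, Real.rpow_neg ht2, Real.rpow_natCast, div_pow]
  ring

/-- `f` is real-differentiable at `z` with Wirtinger derivative `∂f/∂z = f'`. Differentiability is
recorded separately because `dz` is computed from the junk value `fderiv ℝ f z = 0` without it. -/
def HasDzAt (f : ℂ → ℂ) (f' z : ℂ) : Prop := DifferentiableAt ℝ f z ∧ dz f z = f'

namespace HasDzAt

variable {f g : ℂ → ℂ} {f' g' z : ℂ}

lemma of_hasFDerivAt {L : ℂ →L[ℝ] ℂ} (hf : HasFDerivAt f L z) :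
    HasDzAt f (1 / 2 * (L 1 - I * L I)) z :=
  ⟨hf.differentiableAt, by rw [dz, hf.fderiv]⟩

lemma congr_dz (hf : HasDzAt f f' z) (h : f' = g') : HasDzAt f g' z := h ▸ hf

lemma of_hasDerivAt (hf : HasDerivAt f f' z) : HasDzAt f f' z := by
  refine (of_hasFDerivAt (hf.hasFDerivAt.restrictScalars ℝ)).congr_dz ?_
  simp only [ContinuousLinearMap.coe_restrictScalars', ContinuousLinearMap.toSpanSingleton_apply,
    smul_eq_mul, one_mul]
  linear_combination (-f' / 2) * I_sq

lemma conj_of_differentiableAt (hf : DifferentiableAt ℂ f z) :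
    HasDzAt (fun z => conj (f z)) 0 z := by
  refine (of_hasFDerivAt (conjCLE.toContinuousLinearMap.hasFDerivAt.comp z
    (hf.hasDerivAt.hasFDerivAt.restrictScalars ℝ))).congr_dz ?_
  simp only [ContinuousLinearMap.comp_apply, ContinuousLinearMap.coe_restrictScalars',
    ContinuousLinearMap.toSpanSingleton_apply, smul_eq_mul, one_mul, ContinuousLinearEquiv.coe_coe,
    ContinuousAlgEquiv.coeCLE_apply, conjCAE_apply, map_mul, conj_I]
  linear_combination (conj (deriv f z) / 2) * I_sq

lemma add (hf : HasDzAt f f' z) (hg : HasDzAt g g' z) :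
    HasDzAt (fun z => f z + g z) (f' + g') z := by
  refine (of_hasFDerivAt (hf.1.hasFDerivAt.add hg.1.hasFDerivAt)).congr_dz ?_
  rw [← hf.2, ← hg.2, dz, dz, add_apply, add_apply]
  ring

lemma mul (hf : HasDzAt f f' z) (hg : HasDzAt g g' z) :
    HasDzAt (fun z => f z * g z) (f' * g z + f z * g') z := by
  refine (of_hasFDerivAt (hf.1.hasFDerivAt.mul hg.1.hasFDerivAt)).congr_dz ?_
  rw [← hf.2, ← hg.2, dz, dz]
  simp only [add_apply, smul_apply, smul_eq_mul]
  ring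

lemma const_mul (a : ℂ) (hf : HasDzAt f f' z) : HasDzAt (fun z => a * f z) (a * f') z := by
  simpa using (of_hasDerivAt (hasDerivAt_const z a)).mul hf

lemma pow (hf : HasDzAt f f' z) (n : ℕ) :
    HasDzAt (fun z => f z ^ n) (n * f z ^ (n - 1) * f') z := by
  refine (of_hasFDerivAt (hf.1.hasFDerivAt.pow n)).congr_dz ?_
  rw [← hf.2, dz]
  simp only [nsmul_eq_mul, smul_apply, smul_eq_mul]
  ring

lemma comp_ofReal {T : ℂ → ℝ} {g : ℝ → ℂ} {t g' : ℂ} (hT : HasDzAt (fun z => (T z : ℂ)) t z)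
    (hg : HasDerivAt g g' (T z)) : HasDzAt (fun z => g (T z)) (g' * t) z := by
  obtain ⟨L, hL⟩ : ∃ L, HasFDerivAt T L z :=
    ⟨_, reCLM.hasFDerivAt.comp z hT.1.hasFDerivAt⟩
  have hcast : HasFDerivAt (fun z => (T z : ℂ)) (ofRealCLM.comp L) z :=
    ofRealCLM.hasFDerivAt.comp z hL
  refine (of_hasFDerivAt (hg.hasFDerivAt.comp z hL)).congr_dz ?_
  rw [← hT.2, dz, hcast.fderiv]
  simp only [ContinuousLinearMap.comp_apply, ContinuousLinearMap.toSpanSingleton_apply, real_smul,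
    ofRealCLM_apply]
  ring

lemma im_inv (hz : z.im ≠ 0) :
    HasDzAt (fun z => (z.im : ℂ)⁻¹) (I / 2 * ((z.im : ℂ)⁻¹) ^ 2) z := by
  have him : HasDzAt (fun z => (z.im : ℂ)) (-I / 2) z := by
    refine (of_hasFDerivAt (ofRealCLM.comp imCLM).hasFDerivAt).congr_dz ?_
    simp only [ContinuousLinearMap.comp_apply, imCLM_apply, one_im, I_im, ofRealCLM_apply,
      ofReal_zero, ofReal_one]
    ring
  have hinv : HasDerivAt (fun y : ℝ => (y : ℂ)⁻¹) (-((z.im : ℂ) ^ 2)⁻¹) z.im :=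
    (hasDerivAt_inv (ofReal_ne_zero.2 hz)).comp_ofReal
  exact (him.comp_ofReal hinv).congr_dz (by ring)

end HasDzAt

/-- Here `hT` and `hB` express `B = R_0 T` and `R_2 B = 0` at `z`. -/
lemma raise_pow_mul_comp {B : ℂ → ℂ} {T : ℂ → ℝ} {g : ℝ → ℂ} {g' z : ℂ}
    (hT : HasDzAt (fun z => (T z : ℂ)) (B z / (2 * I)) z) (hB : HasDzAt B (I / z.im * B z) z)
    (hg : HasDerivAt g g' (T z)) (j : ℕ) :
    raise (2 * j) (fun z => B z ^ j * g (T z)) z = B z ^ (j + 1) * g' := by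
  have hpow : HasDzAt (fun z => B z ^ j) (j * (I / z.im) * B z ^ j) z := by
    refine (hB.pow j).congr_dz ?_
    cases j with
    | zero => simp
    | succ j =>
      rw [Nat.add_sub_cancel]
      ring
  rw [raise, (hpow.mul (hT.comp_ofReal hg)).2]
  push_cast
  field_simp
  linear_combination (2 * j * B z ^ j * g (T z) / z.im) * I_sq

lemma raise_congr (κ : ℝ) {f g : ℂ → ℂ} {z : ℂ} (h : f =ᶠ[nhds z] g) :
    raise κ f z = raise κ g z := by
  rw [raise, raise, dz, dz, h.fderiv_eq, h.eq_of_nhds]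

lemma raiseIter_comp {U : Set ℂ} (hU : IsOpen U) {F B : ℂ → ℂ} {T : ℂ → ℝ} {G : ℕ → ℝ → ℂ}
    (hT : ∀ z ∈ U, HasDzAt (fun z => (T z : ℂ)) (B z / (2 * I)) z)
    (hB : ∀ z ∈ U, HasDzAt B (I / z.im * B z) z)
    (hG : ∀ j, ∀ z ∈ U, HasDerivAt (G j) (G (j + 1) (T z)) (T z))
    (hF : ∀ z ∈ U, F z = G 0 (T z)) (j : ℕ) :
    ∀ z ∈ U, raiseIter 0 j F z = B z ^ j * G j (T z) := by
  induction j with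
  | zero => simpa [raiseIter] using hF
  | succ j ih =>
    intro z hz
    have hev : raiseIter 0 j F =ᶠ[nhds z] fun z => B z ^ j * G j (T z) :=
      Filter.eventuallyEq_of_mem (hU.mem_nhds hz) ih
    simp only [raiseIter, zero_add]
    rw [raise_congr _ hev]
    exact raise_pow_mul_comp (hT z hz) (hB z hz) (hG j z hz) j

lemma sign_sq_of_ne_zero {x : ℝ} (hx : x ≠ 0) : Real.sign x ^ 2 = 1 := by
  rcases Real.sign_apply_eq_of_ne_zero x hx with h | h <;> simp [h]

section QuadraticForm

variable {N : ℕ} {a b c : ℝ} {z : ℂ}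

lemma normSq_Qx (hN : 1 ≤ N) (hz : z.im ≠ 0) :
    normSq (Qx N a b c z) = 2 * N * z.im ^ 2 * (pX N a b c z ^ 2 + 2 * mVal N a b c) := by
  have hN0 : (N : ℝ) ≠ 0 := by positivity
  have hre : (Qx N a b c z).re = a * N * (z.re ^ 2 - z.im ^ 2) + b * z.re + c := by
    simp [Qx, sq]
  have him : (Qx N a b c z).im = (2 * a * N * z.re + b) * z.im := by
    simp only [Qx, sq, add_im, mul_im, mul_re, ofReal_re, ofReal_im, natCast_re, natCast_im]
    ring
  rw [normSq_apply, hre, him, pX, mVal, div_pow, mul_pow, Real.sq_sqrt (by positivity),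
    normSq_apply]
  field_simp
  ring

lemma two_mul_abs_mVal_lt_pX_sq (hN : 1 ≤ N) (hm : mVal N a b c < 0) (hz : z ∈ UH)
    (hQ : Qx N a b c z ≠ 0) : 2 * |mVal N a b c| < pX N a b c z ^ 2 := by
  have hpos := normSq_pos.2 hQ
  rw [normSq_Qx hN (ne_of_gt hz)] at hpos
  rw [abs_of_neg hm]
  linarith [pos_of_mul_pos_right hpos (by positivity)]

lemma pX_ne_zero (hN : 1 ≤ N) (hm : mVal N a b c < 0) (hz : z ∈ UH) : pX N a b c z ≠ 0 := by
  intro hp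
  have hnorm := normSq_nonneg (Qx N a b c z)
  rw [normSq_Qx hN (ne_of_gt hz), hp] at hnorm
  have hy : 0 < z.im := hz
  have hpos : 0 < 2 * N * z.im ^ 2 * -(2 * mVal N a b c) := by
    have : 0 < -(2 * mVal N a b c) := by linarith
    positivity
  linarith

lemma wF_pos (hN : 1 ≤ N) (hm : mVal N a b c < 0) (hz : z ∈ UH) : 0 < wF N a b c z :=
  div_pos (mul_pos two_pos (abs_pos.2 hm.ne)) (sq_pos_of_ne_zero (pX_ne_zero hN hm hz))

lemma wF_lt_one (hN : 1 ≤ N) (hm : mVal N a b c < 0) (hz : z ∈ UH)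
    (hQ : Qx N a b c z ≠ 0) : wF N a b c z < 1 :=
  (div_lt_one (sq_pos_of_ne_zero (pX_ne_zero hN hm hz))).2 (two_mul_abs_mVal_lt_pX_sq hN hm hz hQ)

/-- The raised function `R_0 p_z(X)`, in closed form. -/
def pXRaise (N : ℕ) (a b c : ℝ) (z : ℂ) : ℂ :=
  -(√(2 * N) : ℂ)⁻¹ * conj (Qx N a b c z) * ((z.im : ℂ)⁻¹) ^ 2

lemma ofReal_pX (N : ℕ) (a b c : ℝ) (z : ℂ) :
    (pX N a b c z : ℂ) = (√(2 * N) : ℂ)⁻¹ *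
      (((a * N * z + b / 2) * conj z + (b / 2 * z + c)) * (z.im : ℂ)⁻¹) := by
  rw [pX]
  push_cast
  rw [normSq_eq_conj_mul_self, re_eq_add_conj, div_eq_mul_inv, mul_inv]
  ring

lemma hasDzAt_pX (N : ℕ) (a b c : ℝ) (hz : z.im ≠ 0) :
    HasDzAt (fun z => (pX N a b c z : ℂ)) (pXRaise N a b c z / (2 * I)) z := by
  have hconj : HasDzAt (fun z => conj z) 0 z := .conj_of_differentiableAt differentiableAt_id
  have haffine (s t : ℂ) : HasDzAt (fun z => s * z + t) s z :=
    .of_hasDerivAt (by simpa using ((hasDerivAt_id z).const_mul s).add_const t)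
  simp only [ofReal_pX]
  refine (((((haffine _ _).mul hconj).add (haffine _ _)).mul (.im_inv hz)).const_mul _).congr_dz ?_
  have hy : (z.im : ℂ) ≠ 0 := ofReal_ne_zero.2 hz
  have hsub : z - conj z = 2 * z.im * I := by simpa using sub_conj z
  simp only [pXRaise, Qx, map_add, map_mul, map_pow, conj_ofReal, map_natCast]
  field_simp
  linear_combination (√(2 * N) : ℂ)⁻¹ *
    ((conj z * (2 * a * N * z + b) + b * z + 2 * c) * I_sq - (2 * a * N * conj z + b) * hsub)

lemma hasDzAt_pXRaise (N : ℕ) (a b c : ℝ) (hz : z.im ≠ 0) :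
    HasDzAt (pXRaise N a b c) (I / z.im * pXRaise N a b c z) z := by
  have hQ : DifferentiableAt ℂ (Qx N a b c) z := by unfold Qx; fun_prop
  refine (((HasDzAt.conj_of_differentiableAt hQ).const_mul _).mul
    ((HasDzAt.im_inv hz).pow 2)).congr_dz ?_
  rw [pXRaise]
  push_cast
  ring

lemma continuousOn_pX (N : ℕ) (a b c : ℝ) : ContinuousOn (pX N a b c) UH := fun _ hz =>
  (continuous_re.continuousAt.comp
    (hasDzAt_pX N a b c (ne_of_gt hz)).1.continuousAt).continuousWithinAt

lemma wF_eq_inv_sq (N : ℕ) (a b c : ℝ) {ε : ℝ} (hε : ε ^ 2 = 1) (z : ℂ) :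
    wF N a b c z = ((ε / √(2 * |mVal N a b c|) * pX N a b c z) ^ 2)⁻¹ := by
  rw [wF, mul_pow, div_pow, hε, Real.sq_sqrt (by positivity), one_div, mul_inv, inv_inv,
    div_eq_mul_inv]

lemma one_lt_sign_div_sqrt_mul_pX (hN : 1 ≤ N) (hm : mVal N a b c < 0) (hz : z ∈ UH)
    (hQ : Qx N a b c z ≠ 0) :
    1 < Real.sign (pX N a b c z) / √(2 * |mVal N a b c|) * pX N a b c z := by
  have hp := pX_ne_zero hN hm hz
  have hsqrt : 0 < √(2 * |mVal N a b c|) := Real.sqrt_pos.2 (mul_pos two_pos (abs_pos.2 hm.ne))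
  rw [div_mul_eq_mul_div, one_lt_div hsqrt, Real.sqrt_lt' (Real.sign_mul_pos_of_ne_zero _ hp),
    mul_pow, sign_sq_of_ne_zero hp, one_mul]
  exact two_mul_abs_mVal_lt_pX_sq hN hm hz hQ

lemma mul_pXRaise_mul_neg_one_div (hN : 1 ≤ N) (hm : mVal N a b c < 0) (hz : z ∈ UH)
    (hQ : Qx N a b c z ≠ 0) {ε : ℝ} (hε : ε ^ 2 = 1) :
    (ε / √(2 * |mVal N a b c|) : ℝ) * pXRaise N a b c z *
        (-1 / ((ε / √(2 * |mVal N a b c|) * pX N a b c z) ^ 2 - 1) : ℝ) =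
      (√(4 * N * |mVal N a b c|) * ε : ℝ) / Qx N a b c z := by
  have hy : z.im ≠ 0 := ne_of_gt hz
  have hm0 : 0 < |mVal N a b c| := abs_pos.2 hm.ne
  have hsub : (ε / √(2 * |mVal N a b c|) * pX N a b c z) ^ 2 - 1 =
      normSq (Qx N a b c z) / (4 * N * |mVal N a b c| * z.im ^ 2) := by
    rw [normSq_Qx hN hy, mul_pow, div_pow, hε, Real.sq_sqrt (by positivity), abs_of_neg hm]
    have := hm.ne
    field_simp
    ring
  have hsqrt : √(4 * N * |mVal N a b c|) =
      4 * N * |mVal N a b c| / (√(2 * |mVal N a b c|) * √(2 * N)) := by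
    rw [← Real.sqrt_mul (by positivity), ← Real.div_sqrt]
    ring_nf
  have hconj : conj (Qx N a b c z) ≠ 0 := (map_ne_zero _).2 hQ
  have hyC : (z.im : ℂ) ≠ 0 := ofReal_ne_zero.2 hy
  rw [hsub, hsqrt, pXRaise]
  push_cast
  rw [normSq_eq_conj_mul_self]
  field_simp

end QuadraticForm

/-- For `m < 0` and `k ≥ 1`: `p_z(X) ≠ 0` on `ℍ`; `0 < w(z) < 1` whenever `Q_X(z) ≠ 0`;
and the `k`-fold raising of `w^(k/2)·₂F₁(k/2, (k+1)/2; k+1/2; w)` equals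
`(Γ(2k)/Γ(k))·(√(4N|m|)·sgn(p_z(X))/Q_X(z))^k`. -/
theorem raising_hypergeometric (N : ℕ) (hN : 1 ≤ N) (a b c : ℝ) (k : ℕ) (hk : 1 ≤ k)
    (hm : mVal N a b c < 0) :
    (∀ z ∈ UH, pX N a b c z ≠ 0) ∧
    (∀ z ∈ UH, Qx N a b c z ≠ 0 → 0 < wF N a b c z ∧ wF N a b c z < 1) ∧
    (∀ z ∈ UH, Qx N a b c z ≠ 0 →
      raiseIter 0 k
        (fun w => ((wF N a b c w ^ ((k : ℝ) / 2) *
          gaussF ((k : ℝ) / 2) (((k : ℝ) + 1) / 2) ((k : ℝ) + 1 / 2) (wF N a b c w) : ℝ) : ℂ)) z =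
      ((Real.Gamma (2 * k) / Real.Gamma k : ℝ) : ℂ) *
        (((Real.sqrt (4 * N * |mVal N a b c|) * Real.sign (pX N a b c z) : ℝ) : ℂ) /
          Qx N a b c z) ^ k) := by
  refine ⟨fun z => pX_ne_zero hN hm, fun z hz hQ => ⟨wF_pos hN hm hz, wF_lt_one hN hm hz hQ⟩,
    fun z hz hQ => ?_⟩
  set ε := Real.sign (pX N a b c z)
  have hε : ε ^ 2 = 1 := sign_sq_of_ne_zero (pX_ne_zero hN hm hz)
  set r := ε / √(2 * |mVal N a b c|) with hr
  have ht : 1 < r * pX N a b c z := one_lt_sign_div_sqrt_mul_pX hN hm hz hQ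
  have hU : IsOpen (UH ∩ (fun y => r * pX N a b c y) ⁻¹' Ioi 1) :=
    ((continuousOn_pX N a b c).const_mul r).isOpen_inter_preimage
      (isOpen_lt continuous_const continuous_im) isOpen_Ioi
  rw [raiseIter_comp hU (T := fun y => r * pX N a b c y) (B := fun y => r * pXRaise N a b c y)
    (G := fun j t => (legendreSeriesDeriv (k + 1 / 2) k j t : ℂ)) _ _ _ _ k z ⟨hz, ht⟩,
    legendreSeriesDeriv_self hk ht, ← mul_pXRaise_mul_neg_one_div hN hm hz hQ hε, ← hr]
  · push_cast
    ring
  · intro y hy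
    simpa [mul_div_assoc] using (hasDzAt_pX N a b c (ne_of_gt hy.1)).const_mul r
  · intro y hy
    simpa [mul_left_comm] using (hasDzAt_pXRaise N a b c (ne_of_gt hy.1)).const_mul r
  · exact fun j y hy => (hasDerivAt_legendreSeriesDeriv _ _ j hy.2).ofReal_comp
  · intro y hy
    rw [wF_eq_inv_sq N a b c hε y, rpow_mul_gaussF_inv_sq _ _ (one_pos.trans hy.2).le,
      legendreSeriesDeriv_zero]
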